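/- arXiv:1307.4682 — 11 statements merged into one kernel-verified Lean document; each statement's English description precedes it below -/
import Mathlib

section
/- For a V-functor f: A → B between V-categories over a commutative quantale V, the following are equivalent: (1) f is fully faithful; (2) the unit of the adjunction f_⋄ ⊣ f^⋄ is an isomorphism, i.e. ⋁_b B(f a, b) ⊗ B(b, f a') = A(a,a') for all objects a,a' of A. Moreover, these conditions imply that f is representably fully faithful: for every V-category X and all V-functors h,k: X → A, one has ⋀_x A(h x, k x) = ⋀_x B(f(h x), f(k x)). -/
universe u v w

/-- A category enriched in a commutative quantale `V`:
objects together with `V`-valued homs satisfying the identity and composition axioms. -/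
structure VCategory (V : Type u) [CompleteLattice V] [CommMonoid V] where
  Obj : Type v
  hom : Obj → Obj → V
  one_le_hom : ∀ a, (1 : V) ≤ hom a a
  comp_le : ∀ a b c, hom b c * hom a b ≤ hom a c

/-- A `V`-functor is an object assignment which is (hom-)expanding. -/
def IsVFunctor {V : Type u} [CompleteLattice V] [CommMonoid V]
    (A : VCategory.{u, v} V) (B : VCategory.{u, w} V) (f : A.Obj → B.Obj) : Prop :=
  ∀ a a', A.hom a a' ≤ B.hom (f a) (f a')

/-- A module `R : A ⇸ B`. -/
def IsModule {V : Type u} [CompleteLattice V] [CommMonoid V]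
    (A : VCategory.{u, v} V) (B : VCategory.{u, w} V) (R : B.Obj → A.Obj → V) : Prop :=
  ∀ (a a' : A.Obj) (b b' : B.Obj), B.hom b' b * R b a * A.hom a a' ≤ R b' a'

/-- The internal hom of the quantale: `[x,y] = ⋁ {z | x ⊗ z ≤ y}`. -/
def ihom {V : Type u} [CompleteLattice V] [CommMonoid V] (x y : V) : V :=
  sSup {z | x * z ≤ y}

/-- A presheaf on `A`. -/
def IsPresheaf {V : Type u} [CompleteLattice V] [CommMonoid V]
    (A : VCategory.{u, v} V) (F : A.Obj → V) : Prop :=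
  ∀ a a', F a * A.hom a' a ≤ F a'

/-- `f` is fully faithful iff the unit of the graph adjunction is an isomorphism; moreover
these conditions imply that `f` is representably fully faithful. -/
theorem fullyFaithful_iff_unit_iso {V : Type u} [CompleteLattice V] [CommMonoid V]
    (hV : ∀ (x : V) (s : Set V), x * sSup s = ⨆ y ∈ s, x * y)
    (A B : VCategory.{u, v} V)
    (f : A.Obj → B.Obj) (hf : IsVFunctor A B f) :
    ((∀ a a', A.hom a a' = B.hom (f a) (f a')) ↔
      (∀ a a' : A.Obj, (⨆ b, B.hom (f a) b * B.hom b (f a')) = A.hom a a')) ∧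
    ((∀ a a', A.hom a a' = B.hom (f a) (f a')) →
      ∀ (X : VCategory.{u, w} V) (h k : X.Obj → A.Obj),
        IsVFunctor X A h → IsVFunctor X A k →
          (⨅ x, A.hom (h x) (k x)) = ⨅ x, B.hom (f (h x)) (f (k x))) := by
  have mono : ∀ x y z : V, y ≤ z → x * y ≤ x * z := by
    intro x y z hyz
    have h1 : sSup ({y, z} : Set V) = z := by
      rw [sSup_pair]; exact sup_eq_right.mpr hyz
    have h2 := hV x {y, z}
    rw [h1] at h2
    rw [h2]
    exact le_iSup₂_of_le y (by simp) le_rfl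
  have key : ∀ a a' : A.Obj,
      (⨆ b, B.hom (f a) b * B.hom b (f a')) = B.hom (f a) (f a') := by
    intro a a'
    apply le_antisymm
    · refine iSup_le fun b => ?_
      rw [mul_comm]
      exact B.comp_le _ _ _
    · refine le_iSup_of_le (f a') ?_
      calc B.hom (f a) (f a') = B.hom (f a) (f a') * 1 := (mul_one _).symm
        _ ≤ _ := mono _ _ _ (B.one_le_hom _)
  refine ⟨⟨fun h a a' => (key a a').trans (h a a').symm,
    fun h a a' => (h a a').symm.trans (key a a')⟩, ?_⟩
  intro hff X h k _ _
  exact iInf_congr fun x => hff _ _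
end

section
/- Given V-functors j: X' → X, f: X' → A and u: A → X between V-categories over a commutative quantale V, the equality X(j x', u a) = ⋁_w X'(x', w) ⊗ A(f w, a) holds for all objects x' of X' and a of A if and only if f is left adjoint to u relative to j, i.e. X(j x', u a) = A(f x', a) for all objects x' of X' and a of A. -/
universe u v w

/-- The square is exact iff `f` is left adjoint to `u` relative to `j`. -/
theorem square_exact_iff_relative_adjunction {V : Type u} [CompleteLattice V] [CommMonoid V]
    (hV : ∀ (x : V) (s : Set V), x * sSup s = ⨆ y ∈ s, x * y)
    (X' X A : VCategory.{u, v} V)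
    (j : X'.Obj → X.Obj) (f : X'.Obj → A.Obj) (u : A.Obj → X.Obj)
    (hj : IsVFunctor X' X j) (hf : IsVFunctor X' A f) (hu : IsVFunctor A X u) :
    (∀ (x' : X'.Obj) (a : A.Obj),
        X.hom (j x') (u a) = ⨆ w, X'.hom x' w * A.hom (f w) a) ↔
      (∀ (x' : X'.Obj) (a : A.Obj), X.hom (j x') (u a) = A.hom (f x') a) := by
  have mono : ∀ x a b : V, a ≤ b → x * a ≤ x * b := by
    intro x a b h
    have h1 := hV x {a, b}
    have h2 : sSup {a, b} = b := by rw [sSup_pair]; exact sup_eq_right.mpr h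
    rw [h2] at h1
    rw [h1]
    exact le_iSup₂_of_le a (by simp) le_rfl
  have key : ∀ (x' : X'.Obj) (a : A.Obj),
      (⨆ w, X'.hom x' w * A.hom (f w) a) = A.hom (f x') a := by
    intro x' a
    apply le_antisymm
    · refine iSup_le fun w => ?_
      rw [mul_comm]
      exact (mono _ _ _ (hf x' w)).trans (A.comp_le _ _ _)
    · refine le_iSup_of_le x' ?_
      rw [mul_comm]
      have := mono (A.hom (f x') a) _ _ (X'.one_le_hom x')
      rwa [mul_one] at this
  simp only [key]
end

section
/- Let j: A → B, h: A → X, l: B → X be V-functors between V-categories over a commutative quantale V such that X(x, l b) = ⋁_a X(x, h a) ⊗ B(j a, b) for all objects x of X and b of B. Then (i) l is a left Kan extension of h along j: for every V-functor k: B → X, one has I ≤ ⋀_b X(l b, k b) if and only if I ≤ ⋀_a X(h a, k(j a)); and (ii) this Kan extension is absolute: for every V-functor f: X → X' and every V-functor k: B → X', one has I ≤ ⋀_b X'(f(l b), k b) if and only if I ≤ ⋀_a X'(f(h a), k(j a)). -/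
universe u v w

theorem kan_aux_mul_le {V : Type u} [CompleteLattice V] [CommMonoid V]
    (hV : ∀ (x : V) (s : Set V), x * sSup s = ⨆ y ∈ s, x * y)
    {a b c d : V} (h1 : a ≤ b) (h2 : c ≤ d) : a * c ≤ b * d := by
  have key : ∀ x y z : V, y ≤ z → x * y ≤ x * z := by
    intro x y z hyz
    have e : z = sSup {y, z} := by rw [sSup_pair, sup_eq_right.mpr hyz]
    rw [e, hV]
    exact le_iSup₂_of_le y (by simp) le_rfl
  calc a * c ≤ a * d := key _ _ _ h2
    _ = d * a := mul_comm _ _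
    _ ≤ d * b := key _ _ _ h1
    _ = b * d := mul_comm _ _

theorem kan_aux {V : Type u} [CompleteLattice V] [CommMonoid V]
    (hV : ∀ (x : V) (s : Set V), x * sSup s = ⨆ y ∈ s, x * y)
    (A B X : VCategory.{u, v} V)
    (j : A.Obj → B.Obj) (h : A.Obj → X.Obj) (l : B.Obj → X.Obj)
    (hform : ∀ (x : X.Obj) (b : B.Obj),
      X.hom x (l b) = ⨆ a, X.hom x (h a) * B.hom (j a) b)
    (X' : VCategory.{u, w} V) (F : X.Obj → X'.Obj) (hF : IsVFunctor X X' F)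
    (k : B.Obj → X'.Obj) (hk : IsVFunctor B X' k) :
    ((1 : V) ≤ ⨅ b, X'.hom (F (l b)) (k b)) ↔
      ((1 : V) ≤ ⨅ a, X'.hom (F (h a)) (k (j a))) := by
  rw [le_iInf_iff, le_iInf_iff]
  constructor
  · intro H a
    have h1 : (1 : V) ≤ X.hom (h a) (l (j a)) := by
      rw [hform]
      refine le_iSup_of_le a ?_
      simpa using kan_aux_mul_le hV (X.one_le_hom (h a)) (B.one_le_hom (j a))
    have h2 := kan_aux_mul_le hV (H (j a)) (h1.trans (hF _ _))
    rw [mul_one] at h2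
    exact h2.trans (X'.comp_le _ _ _)
  · intro H b
    refine (X.one_le_hom (l b)).trans ?_
    rw [hform]
    refine iSup_le fun a => ?_
    have h2 := kan_aux_mul_le hV (H a) (hF (l b) (h a))
    rw [one_mul] at h2
    have h3 := h2.trans (X'.comp_le _ _ _)
    rw [mul_comm]
    exact (kan_aux_mul_le hV (hk _ _) h3).trans (X'.comp_le _ _ _)

/-- If the exactness formula for an absolute left Kan extension holds, then `l` is a left
Kan extension of `h` along `j`, and this Kan extension is absolute. -/
theorem absolute_left_kan_extension {V : Type u} [CompleteLattice V] [CommMonoid V]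
    (hV : ∀ (x : V) (s : Set V), x * sSup s = ⨆ y ∈ s, x * y)
    (A B X : VCategory.{u, v} V)
    (j : A.Obj → B.Obj) (h : A.Obj → X.Obj) (l : B.Obj → X.Obj)
    (hj : IsVFunctor A B j) (hh : IsVFunctor A X h) (hl : IsVFunctor B X l)
    (hform : ∀ (x : X.Obj) (b : B.Obj),
      X.hom x (l b) = ⨆ a, X.hom x (h a) * B.hom (j a) b) :
    (∀ k : B.Obj → X.Obj, IsVFunctor B X k →
      (((1 : V) ≤ ⨅ b, X.hom (l b) (k b)) ↔ ((1 : V) ≤ ⨅ a, X.hom (h a) (k (j a))))) ∧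
    (∀ (X' : VCategory.{u, w} V) (F : X.Obj → X'.Obj), IsVFunctor X X' F →
      ∀ k : B.Obj → X'.Obj, IsVFunctor B X' k →
        (((1 : V) ≤ ⨅ b, X'.hom (F (l b)) (k b)) ↔
          ((1 : V) ≤ ⨅ a, X'.hom (F (h a)) (k (j a))))) := by
  exact ⟨fun k hk => kan_aux hV A B X j h l hform X id (fun _ _ => le_rfl) k hk,
    fun X' F hF k hk => kan_aux hV A B X j h l hform X' F hF k hk⟩
end

section
/- Let p0: P → A, p1: P → B, f: A → C, g: B → C be a lax square of V-categories over a commutative quantale V (i.e. I ≤ C(f(p0 w), g(p1 w)) for all w), and suppose f and p1 are left adjoints, with right adjoints f^r: C → A (so C(f a, c) = A(a, f^r c) for all a,c) and p1^r: B → P (so B(p1 w, b) = P(w, p1^r b) for all w,b). Then the square is exact, i.e. C(f a, g b) = ⋁_w A(a, p0 w) ⊗ B(p1 w, b) for all a,b, if and only if p0 ∘ p1^r is isomorphic to f^r ∘ g, i.e. I ≤ A(p0(p1^r b), f^r(g b)) and I ≤ A(f^r(g b), p0(p1^r b)) for every object b of B. -/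
universe u v w

/-- A lax square whose top and left edges are left adjoints is exact iff
`p0 ∘ p1ʳ ≅ fʳ ∘ g`. -/
theorem square_exact_iff_mate_iso {V : Type u} [CompleteLattice V] [CommMonoid V]
    (hV : ∀ (x : V) (s : Set V), x * sSup s = ⨆ y ∈ s, x * y)
    (P A B C : VCategory.{u, v} V)
    (p0 : P.Obj → A.Obj) (p1 : P.Obj → B.Obj) (f : A.Obj → C.Obj) (g : B.Obj → C.Obj)
    (fr : C.Obj → A.Obj) (p1r : B.Obj → P.Obj)
    (hp0 : IsVFunctor P A p0) (hp1 : IsVFunctor P B p1)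
    (hf : IsVFunctor A C f) (hg : IsVFunctor B C g)
    (hfr : IsVFunctor C A fr) (hp1r : IsVFunctor B P p1r)
    (hlax : ∀ w : P.Obj, (1 : V) ≤ C.hom (f (p0 w)) (g (p1 w)))
    (hadj_f : ∀ (a : A.Obj) (c : C.Obj), C.hom (f a) c = A.hom a (fr c))
    (hadj_p1 : ∀ (w : P.Obj) (b : B.Obj), B.hom (p1 w) b = P.hom w (p1r b)) :
    (∀ (a : A.Obj) (b : B.Obj),
        C.hom (f a) (g b) = ⨆ w, A.hom a (p0 w) * B.hom (p1 w) b) ↔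
      (∀ b : B.Obj,
        (1 : V) ≤ A.hom (p0 (p1r b)) (fr (g b)) ∧
        (1 : V) ≤ A.hom (fr (g b)) (p0 (p1r b))) := by
  have mono : ∀ x y z : V, y ≤ z → x * y ≤ x * z := by
    intro x y z h
    have h1 := hV x {y, z}
    rw [sSup_pair, sup_eq_right.mpr h] at h1
    rw [h1]
    exact le_iSup₂_of_le y (by simp) le_rfl
  have key : ∀ (a : A.Obj) (b : B.Obj),
      (⨆ w, A.hom a (p0 w) * B.hom (p1 w) b) = A.hom a (p0 (p1r b)) := by
    intro a b
    apply le_antisymm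
    · refine iSup_le fun w => ?_
      rw [hadj_p1]
      refine (mono _ _ _ (hp0 w (p1r b))).trans ?_
      rw [mul_comm]
      exact A.comp_le _ _ _
    · refine le_iSup_of_le (p1r b) ?_
      rw [hadj_p1]
      have := mono (A.hom a (p0 (p1r b))) _ _ (P.one_le_hom (p1r b))
      rwa [mul_one] at this
  have yon : ∀ a x y : A.Obj, (1 : V) ≤ A.hom x y → A.hom a x ≤ A.hom a y := by
    intro a x y h
    have h1 := mono (A.hom a x) _ _ h
    rw [mul_one, mul_comm] at h1
    exact h1.trans (A.comp_le _ _ _)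
  constructor
  · intro h b
    have e : ∀ a, A.hom a (fr (g b)) = A.hom a (p0 (p1r b)) := fun a => by
      rw [← key, ← h, hadj_f]
    exact ⟨by rw [e]; exact A.one_le_hom _, by rw [← e]; exact A.one_le_hom _⟩
  · intro h a b
    rw [key, hadj_f]
    exact le_antisymm (yon _ _ _ (h b).2) (yon _ _ _ (h b).1)
end

section
/- The tensor product of two exact squares is exact: let (p0: P → A, p1: P → B, f: A → C, g: B → C) and (p0': P' → A', p1': P' → B', f': A' → C', g': B' → C') be exact lax squares of V-categories over a commutative quantale V. Then for all objects a of A, a' of A', b of B, b' of B': C(f a, g b) ⊗ C'(f' a', g' b') = ⋁_{(w,w')} (A(a, p0 w) ⊗ A'(a', p0' w')) ⊗ (B(p1 w, b) ⊗ B'(p1' w', b')), where (w,w') ranges over pairs of objects of P and P'; that is, the square of tensor-product V-categories and componentwise V-functors is again exact. -/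
universe u v w

/-- The tensor product of two exact lax squares is exact. -/
theorem tensor_of_exact_squares_exact {V : Type u} [CompleteLattice V] [CommMonoid V]
    (hV : ∀ (x : V) (s : Set V), x * sSup s = ⨆ y ∈ s, x * y)
    (P A B C : VCategory.{u, v} V)
    (p0 : P.Obj → A.Obj) (p1 : P.Obj → B.Obj) (f : A.Obj → C.Obj) (g : B.Obj → C.Obj)
    (hp0 : IsVFunctor P A p0) (hp1 : IsVFunctor P B p1)
    (hf : IsVFunctor A C f) (hg : IsVFunctor B C g)
    (hlax : ∀ w : P.Obj, (1 : V) ≤ C.hom (f (p0 w)) (g (p1 w)))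
    (hexact : ∀ (a : A.Obj) (b : B.Obj),
      C.hom (f a) (g b) = ⨆ w, A.hom a (p0 w) * B.hom (p1 w) b)
    (P' A' B' C' : VCategory.{u, v} V)
    (p0' : P'.Obj → A'.Obj) (p1' : P'.Obj → B'.Obj)
    (f' : A'.Obj → C'.Obj) (g' : B'.Obj → C'.Obj)
    (hp0' : IsVFunctor P' A' p0') (hp1' : IsVFunctor P' B' p1')
    (hf' : IsVFunctor A' C' f') (hg' : IsVFunctor B' C' g')
    (hlax' : ∀ w : P'.Obj, (1 : V) ≤ C'.hom (f' (p0' w)) (g' (p1' w)))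
    (hexact' : ∀ (a : A'.Obj) (b : B'.Obj),
      C'.hom (f' a) (g' b) = ⨆ w, A'.hom a (p0' w) * B'.hom (p1' w) b) :
    ∀ (a : A.Obj) (a' : A'.Obj) (b : B.Obj) (b' : B'.Obj),
      C.hom (f a) (g b) * C'.hom (f' a') (g' b') =
        ⨆ ww : P.Obj × P'.Obj,
          (A.hom a (p0 ww.1) * A'.hom a' (p0' ww.2)) *
            (B.hom (p1 ww.1) b * B'.hom (p1' ww.2) b') := by
  intro a a' b b'
  have hR : ∀ {ι : Type v} (x : V) (h : ι → V), x * (⨆ i, h i) = ⨆ i, x * h i := by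
    intro ι x h
    rw [iSup, hV, iSup_range]
  have hL : ∀ {ι : Type v} (x : V) (h : ι → V), (⨆ i, h i) * x = ⨆ i, h i * x := by
    intro ι x h
    rw [mul_comm, hR]
    exact iSup_congr fun i => mul_comm _ _
  rw [hexact, hexact', hL, iSup_prod]
  refine iSup_congr fun w => ?_
  rw [hR]
  exact iSup_congr fun w' => mul_mul_mul_comm _ _ _ _
end

section
/- The presheaf construction L satisfies the Beck-Chevalley Condition: if (p0: P → A, p1: P → B, f: A → C, g: B → C) is an exact lax square of V-categories over a commutative quantale V, then the induced square of presheaf V-categories is exact; concretely, for every presheaf F on A and every presheaf G on B: ⋀_c [ ⋁_a F a ⊗ C(c, f a), ⋁_b G b ⊗ C(c, g b) ] = ⋁_H ( ⋀_a [ F a, ⋁_w H w ⊗ A(a, p0 w) ] ) ⊗ ( ⋀_b [ ⋁_w H w ⊗ B(b, p1 w), G b ] ), where H ranges over presheaves on P. -/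
universe u v w

theorem q_mono {V : Type u} [CompleteLattice V] [CommMonoid V]
    (hV : ∀ (x : V) (s : Set V), x * sSup s = ⨆ y ∈ s, x * y)
    {x y z : V} (h : y ≤ z) : x * y ≤ x * z := by
  have h1 : sSup {y, z} = z := by rw [sSup_pair]; exact sup_eq_right.2 h
  rw [← h1, hV]
  exact le_iSup₂_of_le y (by simp) le_rfl

theorem q_mul_iSup {V : Type u} [CompleteLattice V] [CommMonoid V]
    (hV : ∀ (x : V) (s : Set V), x * sSup s = ⨆ y ∈ s, x * y)
    {ι : Sort*} (x : V) (h : ι → V) : x * (⨆ i, h i) = ⨆ i, x * h i := by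
  rw [iSup, hV, iSup_range]

theorem q_adj {V : Type u} [CompleteLattice V] [CommMonoid V]
    (hV : ∀ (x : V) (s : Set V), x * sSup s = ⨆ y ∈ s, x * y)
    {x y z : V} : z ≤ ihom x y ↔ x * z ≤ y := by
  constructor
  · intro h
    refine (q_mono hV h).trans ?_
    rw [ihom, hV]
    exact iSup₂_le fun _ h => h
  · intro h
    exact le_sSup h

/-- The presheaf construction satisfies the Beck-Chevalley Condition: it maps exact
squares to exact squares. -/
theorem presheaf_construction_BCC {V : Type u} [CompleteLattice V] [CommMonoid V]
    (hV : ∀ (x : V) (s : Set V), x * sSup s = ⨆ y ∈ s, x * y)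
    (P A B C : VCategory.{u, v} V)
    (p0 : P.Obj → A.Obj) (p1 : P.Obj → B.Obj) (f : A.Obj → C.Obj) (g : B.Obj → C.Obj)
    (hp0 : IsVFunctor P A p0) (hp1 : IsVFunctor P B p1)
    (hf : IsVFunctor A C f) (hg : IsVFunctor B C g)
    (hlax : ∀ w : P.Obj, (1 : V) ≤ C.hom (f (p0 w)) (g (p1 w)))
    (hexact : ∀ (a : A.Obj) (b : B.Obj),
      C.hom (f a) (g b) = ⨆ w, A.hom a (p0 w) * B.hom (p1 w) b) :
    ∀ (F : A.Obj → V) (G : B.Obj → V), IsPresheaf A F → IsPresheaf B G →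
      (⨅ c : C.Obj, ihom (⨆ a, F a * C.hom c (f a)) (⨆ b, G b * C.hom c (g b))) =
        ⨆ H : {H : P.Obj → V // IsPresheaf P H},
          (⨅ a : A.Obj, ihom (F a) (⨆ w, H.1 w * A.hom a (p0 w))) *
            (⨅ b : B.Obj, ihom (⨆ w, H.1 w * B.hom b (p1 w)) (G b)) := by
  have mono : ∀ {x x' y y' : V}, x ≤ x' → y ≤ y' → x * y ≤ x' * y' := by
    intro x x' y y' h h'
    refine (q_mono hV h').trans ?_
    rw [mul_comm x, mul_comm x']
    exact q_mono hV h
  intro F G hF hG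
  apply le_antisymm
  · refine le_iSup_of_le ⟨fun w => G (p1 w), fun w w' =>
      (mono le_rfl (hp1 w' w)).trans (hG _ _)⟩ ?_
    set L := (⨅ c : C.Obj, ihom (⨆ a, F a * C.hom c (f a)) (⨆ b, G b * C.hom c (g b))) with hL
    rw [← mul_one L]
    refine mono (le_iInf fun a => (q_adj hV).2 ?_) (le_iInf fun b => (q_adj hV).2 ?_)
    · have h1 : (⨆ a', F a' * C.hom (f a) (f a')) * L ≤ ⨆ b, G b * C.hom (f a) (g b) :=
        (q_adj hV).1 (iInf_le _ (f a))
      have h2 : F a ≤ ⨆ a', F a' * C.hom (f a) (f a') := by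
        refine le_iSup_of_le a ?_
        calc F a = F a * 1 := (mul_one _).symm
          _ ≤ _ := mono le_rfl (C.one_le_hom _)
      refine ((mono h2 le_rfl).trans h1).trans (iSup_le fun b => ?_)
      rw [hexact, q_mul_iSup hV]
      refine iSup_mono fun w => ?_
      calc G b * (A.hom a (p0 w) * B.hom (p1 w) b)
          = (G b * B.hom (p1 w) b) * A.hom a (p0 w) := by
            rw [mul_comm (A.hom _ _), mul_assoc]
        _ ≤ _ := mono (hG _ _) le_rfl
    · rw [mul_one]
      exact iSup_le fun w => hG _ _
  · refine iSup_le fun H => le_iInf fun c => (q_adj hV).2 ?_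
    set X := (⨅ a : A.Obj, ihom (F a) (⨆ w, H.1 w * A.hom a (p0 w))) with hX
    set Y := (⨅ b : B.Obj, ihom (⨆ w, H.1 w * B.hom b (p1 w)) (G b)) with hY
    have hY' : ∀ w, H.1 w * Y ≤ G (p1 w) := by
      intro w
      have h1 : (⨆ w', H.1 w' * B.hom (p1 w) (p1 w')) * Y ≤ G (p1 w) :=
        (q_adj hV).1 (iInf_le _ (p1 w))
      refine (mono ?_ le_rfl).trans h1
      refine le_iSup_of_le w ?_
      calc H.1 w = H.1 w * 1 := (mul_one _).symm
        _ ≤ _ := mono le_rfl (B.one_le_hom _)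
    rw [mul_comm, q_mul_iSup hV]
    refine iSup_le fun a => ?_
    have h1 : F a * X ≤ ⨆ w, H.1 w * A.hom a (p0 w) := (q_adj hV).1 (iInf_le _ a)
    have e : X * Y * (F a * C.hom c (f a)) = (C.hom c (f a) * Y) * (F a * X) := by
      ac_rfl
    rw [e]
    refine (mono le_rfl h1).trans ?_
    rw [q_mul_iSup hV]
    refine iSup_le fun w => le_iSup_of_le (p1 w) ?_
    have h3 : A.hom a (p0 w) * C.hom c (f a) ≤ C.hom c (g (p1 w)) := by
      calc A.hom a (p0 w) * C.hom c (f a)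
          ≤ C.hom (f a) (f (p0 w)) * C.hom c (f a) := mono (hf _ _) le_rfl
        _ ≤ C.hom c (f (p0 w)) := C.comp_le _ _ _
        _ = 1 * C.hom c (f (p0 w)) := (one_mul _).symm
        _ ≤ C.hom (f (p0 w)) (g (p1 w)) * C.hom c (f (p0 w)) := mono (hlax w) le_rfl
        _ ≤ _ := C.comp_le _ _ _
    calc C.hom c (f a) * Y * (H.1 w * A.hom a (p0 w))
        = (H.1 w * Y) * (A.hom a (p0 w) * C.hom c (f a)) := by ac_rfl
      _ ≤ _ := mono (hY' w) h3
end

section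
/- The generalised power construction is functorial on V-functors: for a V-functor f: A → B between V-categories over a commutative quantale V, the direct-image map P f sending a V-subset φ of A to the V-subset of B given by b ↦ ⋁_{a : f a = b} φ a is a V-functor between the generalised power V-categories, i.e. P A(φ,ψ) ≤ P B(P f φ, P f ψ) for all V-subsets φ, ψ of A. -/
universe u v w

/-- The Egli-Milner `V`-valued hom on `V`-subsets of a `V`-category `A`. -/
def PHom {V : Type u} [CompleteLattice V] [CommMonoid V]
    (A : VCategory.{u, v} V) (φ ψ : A.Obj → V) : V :=
  (⨅ a, ihom (φ a) (⨆ a', ψ a' * A.hom a a')) *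
    (⨅ a', ihom (ψ a') (⨆ a, φ a * A.hom a a'))

/-- Direct image of a `V`-subset along a map. -/
def Pmap {V : Type u} [CompleteLattice V] [CommMonoid V] {α : Type v} {β : Type w}
    (f : α → β) (φ : α → V) : β → V :=
  fun b => ⨆ a, ⨆ _ : f a = b, φ a

theorem power_aux {V : Type u} [CompleteLattice V] [CommMonoid V] [IsQuantale V]
    {α : Type v} {β : Type w} (f : α → β) (R : α → α → V) (S : β → β → V)
    (h : ∀ a a', R a a' ≤ S (f a) (f a')) (φ ψ : α → V) :
    (⨅ a, ihom (φ a) (⨆ a', ψ a' * R a a')) ≤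
      ⨅ b, ihom (Pmap f φ b) (⨆ b', Pmap f ψ b' * S b b') := by
  refine le_iInf fun b => le_sSup ?_
  change (⨆ a, ⨆ _ : f a = b, φ a) * _ ≤ _
  rw [Quantale.iSup_mul_distrib]
  refine iSup_le fun a => ?_
  rw [iSup, sSup_mul_distrib, iSup_range]
  refine iSup_le fun hab => ?_
  subst hab
  refine (mul_le_mul_right (iInf_le _ a) (φ a)).trans ?_
  refine (Quantale.rightMulResiduation_le_iff_mul_le.1 (le_refl (ihom _ _))).trans ?_
  refine iSup_le fun a' => le_iSup_of_le (f a') ?_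
  exact mul_le_mul' (le_iSup₂_of_le (f := fun a _ => ψ a) a' rfl le_rfl) (h a a')

/-- The generalised power construction is functorial on `V`-functors. -/
theorem power_functorial {V : Type u} [CompleteLattice V] [CommMonoid V]
    (hV : ∀ (x : V) (s : Set V), x * sSup s = ⨆ y ∈ s, x * y)
    (A B : VCategory.{u, v} V)
    (f : A.Obj → B.Obj) (hf : IsVFunctor A B f) :
    ∀ φ ψ : A.Obj → V, PHom A φ ψ ≤ PHom B (Pmap f φ) (Pmap f ψ) := by
  intro φ ψ
  have : IsQuantale V := ⟨hV, fun s y => by simp only [mul_comm _ y, hV]⟩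
  exact mul_le_mul' (power_aux f A.hom B.hom hf φ ψ)
    (power_aux f (fun a a' => A.hom a' a) (fun b b' => B.hom b' b) (fun a a' => hf a' a) ψ φ)
end

section
/- If the tensor of the commutative quantale V coincides with binary meet (so V is a frame and I = ⊤), then the generalised power construction P satisfies the Beck-Chevalley Condition: for every exact lax square (p0: P → A, p1: P → B, f: A → C, g: B → C) of V-categories and all V-subsets φ of A and ψ of B, the equality P C(P f φ, P g ψ) = ⋁_θ P A(φ, P p0 θ) ∧ P B(P p1 θ, ψ) holds, where θ ranges over all V-subsets of P. -/
universe u v w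

section Helpers
variable {V : Type u} [CompleteLattice V] [CommMonoid V]

theorem aux_inf_iSup (hV : ∀ (x : V) (s : Set V), x * sSup s = ⨆ y ∈ s, x * y)
    (hmeet : ∀ x y : V, x * y = x ⊓ y) {ι : Sort*} (x : V) (k : ι → V) :
    x ⊓ (⨆ i, k i) = ⨆ i, x ⊓ k i := by
  rw [← hmeet, iSup, hV, iSup_range]
  simp only [hmeet]

theorem aux_elim (hV : ∀ (x : V) (s : Set V), x * sSup s = ⨆ y ∈ s, x * y)
    (hmeet : ∀ x y : V, x * y = x ⊓ y) {ι : Sort*} {x y z : V} {k : ι → V}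
    (h1 : y ≤ ⨆ i, k i) (h2 : y ≤ x) (h : ∀ i, x ⊓ k i ≤ z) : y ≤ z := by
  refine (le_inf h2 h1).trans ?_
  rw [aux_inf_iSup hV hmeet]
  exact iSup_le h

theorem aux_le_ihom (hV : ∀ (x : V) (s : Set V), x * sSup s = ⨆ y ∈ s, x * y)
    (hmeet : ∀ x y : V, x * y = x ⊓ y) (x y z : V) : x ≤ ihom y z ↔ y ⊓ x ≤ z := by
  constructor
  · intro h
    refine (inf_le_inf_left y h).trans ?_
    rw [← hmeet, ihom, hV]
    exact iSup₂_le fun _ hw => hw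
  · intro h
    exact le_sSup (by simpa [hmeet] using h)

theorem aux_Pmap_sup (hV : ∀ (x : V) (s : Set V), x * sSup s = ⨆ y ∈ s, x * y)
    (hmeet : ∀ x y : V, x * y = x ⊓ y) {α β : Type v} (f : α → β) (φ : α → V) (k : β → V) :
    (⨆ b, Pmap f φ b * k b) = ⨆ a, φ a ⊓ k (f a) := by
  apply le_antisymm
  · refine iSup_le fun b => ?_
    rw [hmeet, inf_comm, Pmap, aux_inf_iSup hV hmeet]
    refine iSup_le fun a => ?_
    rw [aux_inf_iSup hV hmeet]
    refine iSup_le fun h => ?_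
    subst h
    rw [inf_comm]
    exact le_iSup (fun a => φ a ⊓ k (f a)) a
  · refine iSup_le fun a => ?_
    refine le_iSup_of_le (f a) ?_
    rw [hmeet]
    exact inf_le_inf_right _ (le_iSup₂_of_le a rfl le_rfl)

theorem aux_Pmap_le (hV : ∀ (x : V) (s : Set V), x * sSup s = ⨆ y ∈ s, x * y)
    (hmeet : ∀ x y : V, x * y = x ⊓ y) {α β : Type v} (f : α → β) (φ : α → V) (k : β → V)
    (x : V) : (∀ b, Pmap f φ b ⊓ x ≤ k b) ↔ ∀ a, φ a ⊓ x ≤ k (f a) := by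
  constructor
  · intro h a
    have e : φ a ≤ Pmap f φ (f a) := by
      unfold Pmap
      exact le_iSup₂_of_le (f := fun a' (_ : f a' = f a) => φ a') a rfl le_rfl
    exact (inf_le_inf_right _ e).trans (h (f a))
  · intro h b
    rw [inf_comm, Pmap, aux_inf_iSup hV hmeet]
    refine iSup_le fun a => ?_
    rw [aux_inf_iSup hV hmeet]
    refine iSup_le fun e => ?_
    subst e
    rw [inf_comm]
    exact h a

theorem aux_le_PHom (hV : ∀ (x : V) (s : Set V), x * sSup s = ⨆ y ∈ s, x * y)
    (hmeet : ∀ x y : V, x * y = x ⊓ y) {α β : Type v} (C : VCategory.{u, v} V)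
    (f : α → C.Obj) (g : β → C.Obj) (φ : α → V) (ψ : β → V) (x : V) :
    x ≤ PHom C (Pmap f φ) (Pmap g ψ) ↔
      (∀ a, φ a ⊓ x ≤ ⨆ b, ψ b ⊓ C.hom (f a) (g b)) ∧
      (∀ b, ψ b ⊓ x ≤ ⨆ a, φ a ⊓ C.hom (f a) (g b)) := by
  rw [PHom, hmeet, le_inf_iff, le_iInf_iff, le_iInf_iff]
  simp only [aux_le_ihom hV hmeet, aux_Pmap_sup hV hmeet]
  rw [aux_Pmap_le hV hmeet f φ (fun c => ⨆ b, ψ b ⊓ C.hom c (g b)),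
    aux_Pmap_le hV hmeet g ψ (fun c => ⨆ a, φ a ⊓ C.hom (f a) c)]

theorem aux_Pmap_id {α : Type v} (φ : α → V) : Pmap (fun a : α => a) φ = φ := by
  funext b
  simp [Pmap]

end Helpers

/-- If the tensor of `V` is binary meet, the generalised power construction satisfies
the Beck-Chevalley Condition. -/
theorem power_BCC {V : Type u} [CompleteLattice V] [CommMonoid V]
    (hV : ∀ (x : V) (s : Set V), x * sSup s = ⨆ y ∈ s, x * y)
    (hmeet : ∀ x y : V, x * y = x ⊓ y)
    (P A B C : VCategory.{u, v} V)
    (p0 : P.Obj → A.Obj) (p1 : P.Obj → B.Obj) (f : A.Obj → C.Obj) (g : B.Obj → C.Obj)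
    (hp0 : IsVFunctor P A p0) (hp1 : IsVFunctor P B p1)
    (hf : IsVFunctor A C f) (hg : IsVFunctor B C g)
    (hlax : ∀ w : P.Obj, (1 : V) ≤ C.hom (f (p0 w)) (g (p1 w)))
    (hexact : ∀ (a : A.Obj) (b : B.Obj),
      C.hom (f a) (g b) = ⨆ w, A.hom a (p0 w) * B.hom (p1 w) b) :
    ∀ (φ : A.Obj → V) (ψ : B.Obj → V),
      PHom C (Pmap f φ) (Pmap g ψ) =
        ⨆ θ : P.Obj → V, PHom A φ (Pmap p0 θ) ⊓ PHom B (Pmap p1 θ) ψ := by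
  intro φ ψ
  have hL := fun (θ : P.Obj → V) x => aux_le_PHom hV hmeet A (fun a => a) p0 φ θ x
  have hR := fun (θ : P.Obj → V) x => aux_le_PHom hV hmeet B p1 (fun b => b) θ ψ x
  simp only [aux_Pmap_id] at hL hR
  simp only [hmeet] at hexact
  have hC : ∀ a b w, A.hom a (p0 w) ⊓ B.hom (p1 w) b ≤ C.hom (f a) (g b) := by
    intro a b w
    rw [hexact]
    exact le_iSup (fun w => A.hom a (p0 w) ⊓ B.hom (p1 w) b) w
  apply le_antisymm
  · obtain ⟨h1, h2⟩ := (aux_le_PHom hV hmeet C f g φ ψ _).1 le_rfl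
    generalize PHom C (Pmap f φ) (Pmap g ψ) = x at h1 h2 ⊢
    let t : A.Obj → B.Obj → P.Obj → V := fun a b w =>
      φ a ⊓ ψ b ⊓ (A.hom a (p0 w) ⊓ B.hom (p1 w) b)
    let θ : P.Obj → V := fun w => ⨆ a, ⨆ b, t a b w
    have hθ : ∀ a b w, t a b w ≤ θ w := fun a b w => le_iSup₂_of_le a b le_rfl
    have tφ : ∀ a b w, t a b w ≤ φ a := fun a b w => inf_le_left.trans inf_le_left
    have tψ : ∀ a b w, t a b w ≤ ψ b := fun a b w => inf_le_left.trans inf_le_right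
    have tA : ∀ a b w, t a b w ≤ A.hom a (p0 w) := fun a b w => inf_le_right.trans inf_le_left
    have tB : ∀ a b w, t a b w ≤ B.hom (p1 w) b := fun a b w => inf_le_right.trans inf_le_right
    have key : ∀ a b z, (∀ w, t a b w ≤ z) → φ a ⊓ (ψ b ⊓ C.hom (f a) (g b)) ≤ z := by
      intro a b z h
      rw [hexact, ← inf_assoc, aux_inf_iSup hV hmeet]
      exact iSup_le h
    refine le_iSup_of_le θ (le_inf ((hL _ _).2 ⟨fun a => ?_, fun w => ?_⟩)
      ((hR _ _).2 ⟨fun w => ?_, fun b => ?_⟩))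
    · refine aux_elim hV hmeet (h1 a) inf_le_left fun b => key a b _ fun w => ?_
      exact le_iSup_of_le w (le_inf (hθ a b w) (tA a b w))
    · refine inf_le_left.trans (iSup₂_le fun a b => ?_)
      exact le_iSup_of_le a (le_inf (tφ a b w) (tA a b w))
    · refine inf_le_left.trans (iSup₂_le fun a b => ?_)
      exact le_iSup_of_le b (le_inf (tψ a b w) (tB a b w))
    · refine aux_elim hV hmeet (h2 b) inf_le_left fun a => ?_
      rw [inf_left_comm]
      refine key a b _ fun w => ?_
      exact le_iSup_of_le w (le_inf (hθ a b w) (tB a b w))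
  · refine iSup_le fun θ => ?_
    obtain ⟨l1, l2⟩ := (hL θ _).1 (inf_le_left (b := PHom B (Pmap p1 θ) ψ))
    obtain ⟨r1, r2⟩ := (hR θ _).1 (inf_le_right (a := PHom A φ (Pmap p0 θ)))
    generalize PHom A φ (Pmap p0 θ) ⊓ PHom B (Pmap p1 θ) ψ = x at l1 l2 r1 r2 ⊢
    refine (aux_le_PHom hV hmeet C f g φ ψ _).2 ⟨fun a => ?_, fun b => ?_⟩
    · refine aux_elim hV hmeet (l1 a) inf_le_right fun w => ?_
      refine aux_elim hV hmeet
        ((le_inf (inf_le_right.trans inf_le_left) inf_le_left).trans (r1 w))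
        (inf_le_right.trans inf_le_right) fun b => ?_
      refine le_iSup_of_le b (le_inf (inf_le_right.trans inf_le_left) ?_)
      exact (inf_le_inf_left _ inf_le_right).trans (hC a b w)
    · refine aux_elim hV hmeet (r2 b) inf_le_right fun w => ?_
      refine aux_elim hV hmeet
        ((le_inf (inf_le_right.trans inf_le_left) inf_le_left).trans (l2 w))
        (inf_le_right.trans inf_le_right) fun a => ?_
      refine le_iSup_of_le a (le_inf (inf_le_right.trans inf_le_left) ?_)
      exact (le_inf (inf_le_right.trans inf_le_right) inf_le_left).trans (hC a b w)
end

section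
/- The relation lifting of the presheaf construction L is given by the following formula: for a module R: A ⇸ B between V-categories over a commutative quantale V with collage Coll R and inclusions i0: B → Coll R, i1: A → Coll R, and for every presheaf F on A and every presheaf G on B, the hom in the presheaf V-category L(Coll R) satisfies L(Coll R)(L i0 G, L i1 F) = ⋀_b [ G b, ⋁_a R(b,a) ⊗ F a ], i.e. ⋀_{x ∈ Coll R} [ ⋁_b G b ⊗ Coll R(x, i0 b), ⋁_a F a ⊗ Coll R(x, i1 a) ] = ⋀_b [ G b, ⋁_a R(b,a) ⊗ F a ]. -/
universe u v w

/-- The hom function of the collage of a module `R : A ⇸ B`: objects are the disjoint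
union of the objects of `B` (left) and of `A` (right). -/
def collHom {V : Type u} [CompleteLattice V] [CommMonoid V]
    (A B : VCategory.{u, v} V) (R : B.Obj → A.Obj → V) :
    B.Obj ⊕ A.Obj → B.Obj ⊕ A.Obj → V
  | Sum.inl b, Sum.inl b' => B.hom b b'
  | Sum.inl b, Sum.inr a => R b a
  | Sum.inr _, Sum.inl _ => ⊥
  | Sum.inr a, Sum.inr a' => A.hom a a'

/-- The relation lifting of the presheaf construction computed on a module via its
collage. -/
theorem presheaf_relation_lifting {V : Type u} [CompleteLattice V] [CommMonoid V]
    (hV : ∀ (x : V) (s : Set V), x * sSup s = ⨆ y ∈ s, x * y)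
    (A B : VCategory.{u, v} V)
    (R : B.Obj → A.Obj → V) (hR : IsModule A B R)
    (F : A.Obj → V) (G : B.Obj → V)
    (hF : IsPresheaf A F) (hG : IsPresheaf B G) :
    (⨅ x : B.Obj ⊕ A.Obj,
        ihom (⨆ b, G b * collHom A B R x (Sum.inl b))
          (⨆ a, F a * collHom A B R x (Sum.inr a))) =
      ⨅ b : B.Obj, ihom (G b) (⨆ a, R b a * F a) := by
  have hbot : ∀ x : V, x * ⊥ = ⊥ := by
    intro x
    have h := hV x ∅
    simpa using h
  have hmono : ∀ x y z : V, y ≤ z → x * y ≤ x * z := by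
    intro x y z h
    have h1 := hV x {y, z}
    have h2 : sSup ({y, z} : Set V) = z := by
      rw [sSup_pair]
      exact sup_eq_right.mpr h
    rw [h2] at h1
    rw [h1]
    exact le_iSup₂_of_le y (by simp) le_rfl
  have hG' : ∀ b0, (⨆ b, G b * B.hom b0 b) = G b0 := by
    intro b0
    apply le_antisymm
    · exact iSup_le fun b => hG b b0
    · refine le_iSup_of_le b0 ?_
      calc G b0 = G b0 * 1 := (mul_one _).symm
        _ ≤ _ := hmono _ _ _ (B.one_le_hom b0)
  have htop : ∀ y : V, ihom ⊥ y = ⊤ := by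
    intro y
    refine top_le_iff.mp (le_sSup ?_)
    change (⊥ : V) * ⊤ ≤ y
    rw [mul_comm, hbot]
    exact bot_le
  rw [iInf_sum]
  simp only [collHom, hG', hbot, iSup_bot, htop, iInf_top, inf_top_eq, mul_comm]
end

section
/- The relation lifting of the generalised power construction P is given by the following formula: assume the tensor of the commutative quantale V coincides with binary meet ∧. For a module R: A ⇸ B between V-categories with collage Coll R and inclusions i0: B → Coll R, i1: A → Coll R, and for all V-subsets F of A and G of B, the hom in the generalised power V-category P(Coll R) satisfies P(Coll R)(P i0 G, P i1 F) = ⋀_b [ G b, ⋁_a F a ∧ R(b,a) ] ∧ ⋀_a [ F a, ⋁_b G b ∧ R(b,a) ]. -/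
universe u v w

/-- The Egli-Milner `V`-valued hom on `V`-subsets, given a hom function. -/
def PHomF {V : Type u} [CompleteLattice V] [CommMonoid V] {α : Type v}
    (hom : α → α → V) (φ ψ : α → V) : V :=
  (⨅ x, ihom (φ x) (⨆ x', ψ x' * hom x x')) *
    (⨅ x', ihom (ψ x') (⨆ x, φ x * hom x x'))

/-- The relation lifting of the generalised power construction computed on a module via
its collage, when the tensor of `V` is binary meet. -/
theorem power_relation_lifting {V : Type u} [CompleteLattice V] [CommMonoid V]
    (hV : ∀ (x : V) (s : Set V), x * sSup s = ⨆ y ∈ s, x * y)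
    (hmeet : ∀ x y : V, x * y = x ⊓ y)
    (A B : VCategory.{u, v} V)
    (R : B.Obj → A.Obj → V) (hR : IsModule A B R)
    (F : A.Obj → V) (G : B.Obj → V) :
    PHomF (collHom A B R) (Pmap Sum.inl G) (Pmap Sum.inr F) =
      (⨅ b, ihom (G b) (⨆ a, F a ⊓ R b a)) ⊓ ⨅ a, ihom (F a) (⨆ b, G b ⊓ R b a) := by
  have hl : ∀ b, Pmap (Sum.inl : B.Obj → B.Obj ⊕ A.Obj) G (Sum.inl b) = G b := by
    intro b
    apply le_antisymm
    · refine iSup_le fun b' => iSup_le fun h => ?_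
      rw [Sum.inl.inj h]
    · exact le_iSup_of_le b (le_iSup_of_le rfl le_rfl)
  have hl' : ∀ a, Pmap (Sum.inl : B.Obj → B.Obj ⊕ A.Obj) G (Sum.inr a) = ⊥ := by
    intro a
    simp [Pmap]
  have hr : ∀ a, Pmap (Sum.inr : A.Obj → B.Obj ⊕ A.Obj) F (Sum.inr a) = F a := by
    intro b
    apply le_antisymm
    · refine iSup_le fun b' => iSup_le fun h => ?_
      rw [Sum.inr.inj h]
    · exact le_iSup_of_le b (le_iSup_of_le rfl le_rfl)
  have hr' : ∀ b, Pmap (Sum.inr : A.Obj → B.Obj ⊕ A.Obj) F (Sum.inl b) = ⊥ := by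
    intro a
    simp [Pmap]
  have hbot : ∀ y : V, ihom ⊥ y = ⊤ := by
    intro y
    refine top_le_iff.mp (le_sSup ?_)
    simp [hmeet]
  unfold PHomF
  rw [hmeet]
  simp only [iInf_sum, iSup_sum, hl, hl', hr, hr', hbot, hmeet, collHom, bot_inf_eq, inf_bot_eq,
    iInf_top, iSup_bot, top_inf_eq, inf_top_eq, bot_sup_eq, sup_bot_eq]
end

section
/- Modules correspond exactly to Kleisli morphisms for the presheaf construction: for V-categories A and B over a commutative quantale V, a function R assigning to each pair (b,a), with b an object of B and a an object of A, an element R(b,a) of V satisfies the module condition B(b',b) ⊗ R(b,a) ⊗ A(a,a') ≤ R(b',a') for all a,a',b,b' if and only if (i) for every object a of A the function b ↦ R(b,a) is a presheaf on B, and (ii) the assignment a ↦ R(−,a) is a V-functor from A to the presheaf V-category L B, i.e. A(a,a') ≤ ⋀_b [R(b,a), R(b,a')] for all objects a,a' of A. -/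
universe u v w

/-- Modules correspond exactly to Kleisli morphisms for the presheaf construction. -/
theorem module_iff_kleisli {V : Type u} [CompleteLattice V] [CommMonoid V]
    (hV : ∀ (x : V) (s : Set V), x * sSup s = ⨆ y ∈ s, x * y)
    (A B : VCategory.{u, v} V)
    (R : B.Obj → A.Obj → V) :
    IsModule A B R ↔
      ((∀ a : A.Obj, IsPresheaf B (fun b => R b a)) ∧
        (∀ a a' : A.Obj, A.hom a a' ≤ ⨅ b, ihom (R b a) (R b a'))) := by
  have mono : ∀ x y z : V, y ≤ z → x * y ≤ x * z := by
    intro x y z h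
    have e := hV x {y, z}
    rw [sSup_pair, sup_eq_right.mpr h] at e
    rw [e]
    exact le_iSup₂_of_le y (by simp) le_rfl
  have ev : ∀ x y : V, x * ihom x y ≤ y := by
    intro x y
    unfold ihom
    rw [hV]
    exact iSup₂_le fun z hz => hz
  constructor
  · intro h
    refine ⟨fun a b b' => ?_, fun a a' => le_iInf fun b => le_sSup ?_⟩
    · have h1 := mono (B.hom b' b * R b a) _ _ (A.one_le_hom a)
      rw [mul_one] at h1
      have h2 := h1.trans (h a a b b')
      rwa [mul_comm] at h2
    · have h1 := mono (R b a * A.hom a a') _ _ (B.one_le_hom b)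
      rw [mul_one, mul_comm _ (B.hom b b), ← mul_assoc] at h1
      exact h1.trans (h a a' b b)
  · rintro ⟨h1, h2⟩ a a' b b'
    have h3 := mono (R b a) _ _ ((h2 a a').trans (iInf_le _ b))
    have h4 := mono (B.hom b' b) _ _ (h3.trans (ev _ _))
    rw [← mul_assoc] at h4
    refine h4.trans ?_
    rw [mul_comm]
    exact h1 a' b b'
end
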